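/- Let K, n ≥ 1, let C : {±1}^K → {0,1} be a conjunction of literals, C(z) = ⋀_{r=1}^{l} [z_{j_r} = b_r] with j_r ∈ [K] and b_r ∈ {±1}, and let ψ ∈ {±1}^n. Define the conjunction of literals h' over the variable set [K] × {±1} × [n] by h'(w) = ⋀_{r=1}^{l} ⋀_{i=1}^{n} [w_{(j_r, ψ_i·b_r, i)} = 1]. Then for every x ∈ X_{n,K}, h'(g(x)) = C(U_x(ψ)). -/

import Mathlib

/-!
For fixed `j` and `i ≠ i_j` every coordinate `g_{j,b,i}(x)` is `+1`, whereas
`g_{j,b,i_j}(x) = α_j·b`. So among the `n` literals of `h'` that replace `[z_j = b]` only the one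
at `i = i_j` can fail, and it asks that `α_j·ψ_{i_j}·b = 1`, that is, `U_x(ψ)_j = b`.
-/

/-- A signed `K`-tuple over `[n]`. -/
def SignedTuple (n K : ℕ) : Type := (Fin K → Bool) × (Fin K ↪ Fin n)

/-- `U_x(ψ) = (α_1·ψ_{i_1}, …, α_K·ψ_{i_K})`, where `true` encodes `+1`. -/
def Ux {n K : ℕ} (x : SignedTuple n K) (ψ : Fin n → Bool) : Fin K → Bool :=
  fun j => x.1 j == ψ (x.2 j)

/-- A conjunction of literals over a variable set `V`: a list of literals
`[z_v = c]`, evaluating to `1` on `w : V → {±1}` iff every listed coordinate has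
its specified sign. -/
def evalClause {V : Type*} (c : List (V × Bool)) (w : V → Bool) : Bool :=
  c.all fun l => w l.1 == l.2

/-- The encoding `g : X_{n,K} → {±1}^{[K]×{±1}×[n]}`: `g_{j,b,i}(x) = −1` iff
`x(j) = (−b, i)` (with `true` encoding `+1` and `!b` encoding `−b`). -/
def gmap {n K : ℕ} (x : SignedTuple n K) : Fin K × Bool × Fin n → Bool :=
  fun v => !(x.1 v.1 == !v.2.1 && x.2 v.1 == v.2.2)

theorem evalClause_flatMap {α V : Type*} (L : List α) (f : α → List (V × Bool)) (w : V → Bool) :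
    evalClause (L.flatMap f) w = L.all fun a => evalClause (f a) w :=
  List.all_flatMap

theorem evalClause_map_true_iff {α V : Type*} (L : List α) (v : α → V) (w : V → Bool) :
    evalClause (L.map fun a => (v a, true)) w = true ↔ ∀ a ∈ L, w (v a) = true := by
  simp [evalClause]

theorem beq_eq_iff_eq_beq : ∀ a p b : Bool, (a == p) = b ↔ a = (p == b) := by
  decide

section SignedTuple

variable {n K : ℕ} (x : SignedTuple n K)

theorem gmap_eq_true_iff (j : Fin K) (b : Bool) (i : Fin n) :
    gmap x (j, b, i) = true ↔ (x.2 j = i → x.1 j = b) := by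
  simp [gmap, imp_iff_or_not]

theorem Ux_eq_iff (ψ : Fin n → Bool) (j : Fin K) (b : Bool) :
    Ux x ψ j = b ↔ x.1 j = (ψ (x.2 j) == b) :=
  beq_eq_iff_eq_beq _ _ _

theorem evalClause_gmap_literal (ψ : Fin n → Bool) (j : Fin K) (b : Bool) :
    evalClause ((List.finRange n).map fun i => ((j, (ψ i == b), i), true)) (gmap x) =
      (Ux x ψ j == b) := by
  rw [Bool.eq_iff_iff, beq_iff_eq]
  calc
    _ ↔ ∀ i ∈ List.finRange n, gmap x (j, (ψ i == b), i) = true :=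
      evalClause_map_true_iff _ _ _
    _ ↔ ∀ i, x.2 j = i → x.1 j = (ψ i == b) := by
      simp only [List.mem_finRange, true_imp_iff, gmap_eq_true_iff]
    _ ↔ x.1 j = (ψ (x.2 j) == b) := forall_eq'
    _ ↔ Ux x ψ j = b := (Ux_eq_iff x ψ j b).symm

end SignedTuple

/-- Per-clause identity from Lemma 3.4: for a conjunction of literals
`C(z) = ⋀_r [z_{j_r} = b_r]` and an assignment `ψ`, the conjunction of literals
`h'(w) = ⋀_r ⋀_i [w_{(j_r, ψ_i·b_r, i)} = +1]` satisfies `h'(g(x)) = C(U_x(ψ))`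
for every `x ∈ X_{n,K}` (the sign `ψ_i·b_r` is `+1` iff `ψ_i = b_r`). -/
theorem clause_realization (K n : ℕ) (hK : 1 ≤ K) (hn : 1 ≤ n)
    (c : List (Fin K × Bool)) (ψ : Fin n → Bool) (x : SignedTuple n K) :
    evalClause
      (c.flatMap fun l =>
        (List.finRange n).map fun i => (((l.1, (ψ i == l.2), i) :
          Fin K × Bool × Fin n), true))
      (gmap x) = evalClause c (Ux x ψ) := by
  calc
    _ = c.all fun l => evalClause
          ((List.finRange n).map fun i => ((l.1, (ψ i == l.2), i), true)) (gmap x) :=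
      evalClause_flatMap _ _ _
    _ = c.all fun l => Ux x ψ l.1 == l.2 := by
      simp only [evalClause_gmap_literal]
    _ = evalClause c (Ux x ψ) := rfl
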